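/- Let g : ℝⁿ → M_N(ℝ) be smooth with g(x) invertible for every x. For every j ≥ 1 and every tuple (μ_1,…,μ_j) ∈ {1,…,n}^j, pointwise on ℝⁿ, ξ^{(j)}_{μ_1…μ_j} = Σ_{λ ∈ P₁⁺(j)} (−1)^{length(λ)−1} ξ_{λ(μ_1…μ_j)}. -/

import Mathlib

/-!
Differentiating `ξ_w = (∂_w g) g⁻¹` and using `∂(g⁻¹) = -g⁻¹ (∂g) g⁻¹` together with the symmetry
of second derivatives gives `∂_ν ξ_w = ξ_{wν} - ξ_w ξ_ν` (`pd_xiTup`). By the Leibniz rule,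
`∂_{μ_m}` turns the signed product `∏ (-ξ_{λ_i})` into the sum of the signed products over all ways
of either adding `m` to one of the blocks or inserting the block `{m}` right after one of them
(`pd_signedProd`).

For `j ≥ 1` and `m = j + 1`, every element of `P₁⁺(j + 1)` arises in exactly one such way from
exactly one element of `P₁⁺(j)`: the original is recovered by deleting `m`, and the only tuples
that are not extensions have `{m}` as first block, which is excluded because `1` lies there
(`isP1Plus_succ`, `nodup_p1PlusList`). The formula follows by induction on `j`.
-/

/-- The partial derivative in the `μ`-th coordinate direction of a matrix-valued map on
`ℝⁿ`, taken entrywise. -/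
noncomputable def pd {n N : ℕ} (μ : Fin n) (f : (Fin n → ℝ) → Matrix (Fin N) (Fin N) ℝ) :
    (Fin n → ℝ) → Matrix (Fin N) (Fin N) ℝ :=
  fun x => Matrix.of fun a b => fderiv ℝ (fun y => f y a b) x (Pi.single μ 1)

/-- A matrix-valued map on `ℝⁿ` is smooth iff each entry is `C^∞`. -/
def MSmooth {n N : ℕ} (f : (Fin n → ℝ) → Matrix (Fin N) (Fin N) ℝ) : Prop :=
  ∀ a b, ContDiff ℝ (⊤ : ℕ∞) fun y => f y a b

/-- Iterated partial derivative `∂_{μ_1}⋯∂_{μ_j} f` for a tuple `[μ_1,…,μ_j]`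
(`∂_{μ_j}` acts first, `∂_{μ_1}` last). -/
noncomputable def iterPD {n N : ℕ} :
    List (Fin n) → ((Fin n → ℝ) → Matrix (Fin N) (Fin N) ℝ) →
      ((Fin n → ℝ) → Matrix (Fin N) (Fin N) ℝ)
  | [], f => f
  | μ :: rest, f => pd μ (iterPD rest f)

/-- `ξ_{μ_1…μ_j}(x) = (∂_{μ_1}⋯∂_{μ_j} g)(x) · g(x)⁻¹`. -/
noncomputable def xiTup {n N : ℕ} (g : (Fin n → ℝ) → Matrix (Fin N) (Fin N) ℝ)
    (μs : List (Fin n)) : (Fin n → ℝ) → Matrix (Fin N) (Fin N) ℝ :=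
  fun x => iterPD μs g x * (g x)⁻¹

/-- The trivialized jet components, prepend convention: `ξ^{(1)}_μ = (∂_μ g)·g⁻¹` and
`ξ^{(j)}_{μ_1…μ_j} = ∂_{μ_1}(ξ^{(j−1)}_{μ_2…μ_j})` (the new differentiation index is
prepended, i.e. the head of the list is the outermost derivative). -/
noncomputable def xiJ {n N : ℕ} (g : (Fin n → ℝ) → Matrix (Fin N) (Fin N) ℝ) :
    List (Fin n) → (Fin n → ℝ) → Matrix (Fin N) (Fin N) ℝ
  | [] => fun _ => 1
  | [μ] => fun x => pd μ g x * (g x)⁻¹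
  | μ :: rest => pd μ (xiJ g rest)

/-- The ordered tuple `(μ_a)_{a ∈ κ}` with `κ` sorted increasingly. -/
def tupleOf {n : ℕ} (μ : ℕ → Fin n) (κ : Finset ℕ) : List (Fin n) :=
  (κ.sort (· ≤ ·)).map μ

/-- `ξ_{λ(μ_1…μ_j)} = ξ_{λ_1(μ_1…μ_j)} ⋯ ξ_{λ_l(μ_1…μ_j)}` (ordered matrix product). -/
noncomputable def xiPart {n N : ℕ} (g : (Fin n → ℝ) → Matrix (Fin N) (Fin N) ℝ)
    (μ : ℕ → Fin n) (L : List (Finset ℕ)) (x : Fin n → ℝ) : Matrix (Fin N) (Fin N) ℝ :=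
  (L.map fun A => xiTup g (tupleOf μ A) x).prod

/-- The matrix commutator `[A,B] = AB − BA`. -/
def mcomm {N : ℕ} (A B : Matrix (Fin N) (Fin N) ℝ) : Matrix (Fin N) (Fin N) ℝ :=
  A * B - B * A

/-- A partition of `{1,…,j}`: an ordered tuple of pairwise disjoint nonempty
subsets of `{1,…,j}` whose union is `{1,…,j}`. -/
def IsPartitionOf (j : ℕ) (L : List (Finset ℕ)) : Prop :=
  (∀ A ∈ L, A.Nonempty) ∧ L.Pairwise Disjoint ∧ L.foldr (· ∪ ·) ∅ = Finset.Icc 1 j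

/-- Membership in `P₁⁺(j)`: a partition of `{1,…,j}` whose first block contains `1`. -/
def IsP1Plus (j : ℕ) (L : List (Finset ℕ)) : Prop :=
  IsPartitionOf j L ∧ 1 ∈ L.headI

/-- Membership in `P^a(j)`: a partition of `{1,…,j}` that is anti-lexicographically
ordered, i.e. `max λ₁ < max λ₂ < … < max λ_l`. -/
def IsPAnti (j : ℕ) (L : List (Finset ℕ)) : Prop :=
  IsPartitionOf j L ∧ (L.map fun A => A.sup id).Chain' (· < ·)

/-- `λ_{[s]}⁺` (for `1 ≤ s ≤ l`): adjoin `j+1` to the `s`-th block (1-indexed). -/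
def plusOp (j : ℕ) (L : List (Finset ℕ)) (s : ℕ) : List (Finset ℕ) :=
  L.set (s - 1) (insert (j + 1) (L.getD (s - 1) ∅))

/-- `λ_{[s]}⁻` (for `1 ≤ s ≤ l`): insert the new singleton block `{j+1}` right after
the `s`-th block (1-indexed). -/
def minusOp (j : ℕ) (L : List (Finset ℕ)) (s : ℕ) : List (Finset ℕ) :=
  L.take s ++ [{j + 1}] ++ L.drop s


/-! ### Calculus of matrix-valued maps -/

lemma MSmooth.differentiableAt {n N : ℕ} {f : (Fin n → ℝ) → Matrix (Fin N) (Fin N) ℝ}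
    (hf : MSmooth f) (a b : Fin N) (x : Fin n → ℝ) :
    DifferentiableAt ℝ (fun y => f y a b) x :=
  (hf a b).differentiable (by simp) x

lemma MSmooth.pd {n N : ℕ} {f : (Fin n → ℝ) → Matrix (Fin N) (Fin N) ℝ}
    (hf : MSmooth f) (μ : Fin n) : MSmooth (pd μ f) := by
  intro a b
  exact ((hf a b).fderiv_right (m := (⊤ : ℕ∞)) (by simp)).clm_apply contDiff_const

lemma MSmooth.mul {n N : ℕ} {f h : (Fin n → ℝ) → Matrix (Fin N) (Fin N) ℝ}
    (hf : MSmooth f) (hh : MSmooth h) : MSmooth (f * h) := by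
  intro a b
  simp only [Pi.mul_apply, Matrix.mul_apply]
  exact ContDiff.sum fun c _ => (hf a c).mul (hh c b)

lemma MSmooth.neg {n N : ℕ} {f : (Fin n → ℝ) → Matrix (Fin N) (Fin N) ℝ}
    (hf : MSmooth f) : MSmooth (-f) := fun a b => (hf a b).neg

lemma MSmooth.add {n N : ℕ} {f h : (Fin n → ℝ) → Matrix (Fin N) (Fin N) ℝ}
    (hf : MSmooth f) (hh : MSmooth h) : MSmooth (f + h) := fun a b => (hf a b).add (hh a b)

lemma MSmooth.const {n N : ℕ} (C : Matrix (Fin N) (Fin N) ℝ) :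
    MSmooth (fun _ : Fin n → ℝ => C) := fun _ _ => contDiff_const

lemma MSmooth.det {n N : ℕ} {f : (Fin n → ℝ) → Matrix (Fin N) (Fin N) ℝ}
    (hf : MSmooth f) : ContDiff ℝ (⊤ : ℕ∞) fun x => (f x).det := by
  simp only [Matrix.det_apply]
  exact ContDiff.sum fun σ _ => (contDiff_prod fun i _ => hf (σ i) i).const_smul (σ.sign : ℤˣ)

/-- Cramer's rule expresses the entries of the inverse as smooth functions of those of `f`. -/
lemma MSmooth.inv {n N : ℕ} {f : (Fin n → ℝ) → Matrix (Fin N) (Fin N) ℝ}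
    (hf : MSmooth f) (hinv : ∀ x, IsUnit (f x)) : MSmooth fun x => (f x)⁻¹ := by
  intro a b
  have hdet : ∀ x, (f x).det ≠ 0 := fun x =>
    ((Matrix.isUnit_iff_isUnit_det _).1 (hinv x)).ne_zero
  have hadj : ContDiff ℝ (⊤ : ℕ∞) fun x => (f x).adjugate a b := by
    simp only [Matrix.adjugate_apply]
    apply MSmooth.det
    intro c d
    by_cases h : c = b
    · subst h
      simpa using contDiff_const
    · simpa [Matrix.updateRow_ne h] using hf c d
  have : (fun y => (f y)⁻¹ a b) = fun y => ((f y).det)⁻¹ * (f y).adjugate a b := by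
    funext y
    simp [Matrix.inv_def]
  rw [this]
  exact (hf.det.inv hdet).mul hadj

lemma pd_mul {n N : ℕ} {f h : (Fin n → ℝ) → Matrix (Fin N) (Fin N) ℝ}
    (hf : MSmooth f) (hh : MSmooth h) (μ : Fin n) :
    pd μ (f * h) = pd μ f * h + f * pd μ h := by
  funext x
  ext a b
  simp only [pd, Pi.mul_apply, Pi.add_apply, Matrix.add_apply, Matrix.mul_apply, Matrix.of_apply]
  rw [fderiv_fun_sum fun c _ => (hf.differentiableAt a c x).fun_mul (hh.differentiableAt c b x)]
  rw [← Finset.sum_add_distrib, sum_apply]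
  refine Finset.sum_congr rfl fun c _ => ?_
  rw [fderiv_fun_mul (hf.differentiableAt a c x) (hh.differentiableAt c b x)]
  simp
  ring

lemma pd_add {n N : ℕ} {f h : (Fin n → ℝ) → Matrix (Fin N) (Fin N) ℝ}
    (hf : MSmooth f) (hh : MSmooth h) (μ : Fin n) :
    pd μ (f + h) = pd μ f + pd μ h := by
  funext x
  ext a b
  simp only [pd, Pi.add_apply, Matrix.add_apply, Matrix.of_apply]
  rw [fderiv_fun_add (hf.differentiableAt a b x) (hh.differentiableAt a b x)]
  simp

lemma pd_neg {n N : ℕ} (f : (Fin n → ℝ) → Matrix (Fin N) (Fin N) ℝ) (μ : Fin n) :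
    pd μ (-f) = -pd μ f := by
  funext x
  ext a b
  simp [pd]

lemma pd_const {n N : ℕ} (C : Matrix (Fin N) (Fin N) ℝ) (μ : Fin n) :
    pd μ (fun _ => C) = 0 := by
  funext x
  ext a b
  simp [pd]

lemma pd_comm {n N : ℕ} {f : (Fin n → ℝ) → Matrix (Fin N) (Fin N) ℝ}
    (hf : MSmooth f) (μ ν : Fin n) : pd μ (pd ν f) = pd ν (pd μ f) := by
  funext x
  ext a b
  have hd : DifferentiableAt ℝ (fderiv ℝ fun y => f y a b) x :=
    ((hf a b).fderiv_right (m := (⊤ : ℕ∞)) (by simp)).differentiable (by simp) x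
  have hsymm : IsSymmSndFDerivAt ℝ (fun y => f y a b) x :=
    (hf a b).contDiffAt.isSymmSndFDerivAt (by
      rw [minSmoothness_of_isRCLikeNormedField]
      exact WithTop.coe_le_coe.2 (le_top : (2 : ℕ∞) ≤ ⊤))
  simp only [pd, Matrix.of_apply]
  rw [fderiv_clm_apply hd (differentiableAt_const _), fderiv_clm_apply hd (differentiableAt_const _)]
  simpa using hsymm.eq (Pi.single μ 1) (Pi.single ν 1)

lemma MSmooth.iterPD {n N : ℕ} {f : (Fin n → ℝ) → Matrix (Fin N) (Fin N) ℝ}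
    (hf : MSmooth f) (w : List (Fin n)) : MSmooth (iterPD w f) := by
  induction w with
  | nil => exact hf
  | cons μ w ih => exact ih.pd μ

/-- By symmetry of second derivatives, the innermost derivative may be performed last. -/
lemma iterPD_append_singleton {n N : ℕ} {f : (Fin n → ℝ) → Matrix (Fin N) (Fin N) ℝ}
    (hf : MSmooth f) (w : List (Fin n)) (ν : Fin n) :
    iterPD (w ++ [ν]) f = pd ν (iterPD w f) := by
  induction w with
  | nil => rfl
  | cons μ w ih =>
    change pd μ (iterPD (w ++ [ν]) f) = pd ν (pd μ (iterPD w f))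
    rw [ih, pd_comm (hf.iterPD w)]

lemma xiTup_eq_mul {n N : ℕ} (g : (Fin n → ℝ) → Matrix (Fin N) (Fin N) ℝ) (w : List (Fin n)) :
    xiTup g w = iterPD w g * fun x => (g x)⁻¹ := rfl

lemma MSmooth.xiTup {n N : ℕ} {g : (Fin n → ℝ) → Matrix (Fin N) (Fin N) ℝ}
    (hg : MSmooth g) (hinv : ∀ x, IsUnit (g x)) (w : List (Fin n)) : MSmooth (xiTup g w) :=
  (hg.iterPD w).mul (hg.inv hinv)

/-- Differentiating `g * g⁻¹ = 1` gives `∂(g⁻¹) = -g⁻¹ (∂g) g⁻¹`. -/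
lemma pd_inv {n N : ℕ} {g : (Fin n → ℝ) → Matrix (Fin N) (Fin N) ℝ}
    (hg : MSmooth g) (hinv : ∀ x, IsUnit (g x)) (ν : Fin n) :
    pd ν (fun x => (g x)⁻¹) = -((fun x => (g x)⁻¹) * xiTup g [ν]) := by
  set G : (Fin n → ℝ) → Matrix (Fin N) (Fin N) ℝ := fun x => (g x)⁻¹ with hG
  have hdet : ∀ x, IsUnit (g x).det := fun x => (Matrix.isUnit_iff_isUnit_det _).1 (hinv x)
  have h1 : g * G = fun _ => 1 := funext fun x => Matrix.mul_nonsing_inv _ (hdet x)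
  have h2 : G * g = 1 := funext fun x => Matrix.nonsing_inv_mul _ (hdet x)
  have h3 : pd ν g * G + g * pd ν G = 0 := by
    rw [← pd_mul hg (hg.inv hinv), h1, pd_const]
  have h4 : xiTup g [ν] = pd ν g * G := rfl
  calc pd ν G = G * g * pd ν G := by rw [h2, one_mul]
    _ = G * (pd ν g * G + g * pd ν G) - G * (pd ν g * G) := by noncomm_ring
    _ = -(G * xiTup g [ν]) := by rw [h3, h4]; noncomm_ring

/-- The basic differentiation rule: `∂_ν ξ_w = ξ_{wν} - ξ_w ξ_ν`. -/
lemma pd_xiTup {n N : ℕ} {g : (Fin n → ℝ) → Matrix (Fin N) (Fin N) ℝ}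
    (hg : MSmooth g) (hinv : ∀ x, IsUnit (g x)) (w : List (Fin n)) (ν : Fin n) :
    pd ν (xiTup g w) = xiTup g (w ++ [ν]) - xiTup g w * xiTup g [ν] := by
  rw [xiTup_eq_mul g w, pd_mul (hg.iterPD w) (hg.inv hinv), pd_inv hg hinv,
    xiTup_eq_mul g (w ++ [ν]), iterPD_append_singleton hg]
  noncomm_ring

/-! ### Extending a partition by a new maximal element -/

/-- All ways to add the new element `m` to an ordered tuple of blocks: either `m` joins a block,
or `{m}` becomes a new block placed right after some existing block. -/
def extendBlocks (m : ℕ) : List (Finset ℕ) → List (List (Finset ℕ))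
  | [] => []
  | A :: L => (insert m A :: L) :: (A :: {m} :: L) :: (extendBlocks m L).map (A :: ·)

/-- Removes `m` from every block, dropping the blocks that become empty. -/
def deleteElt (m : ℕ) (L : List (Finset ℕ)) : List (Finset ℕ) :=
  (L.map (·.erase m)).filter (· ≠ ∅)

/-- An enumeration of `P₁⁺(k + 1)`, built by adding the elements `2, …, k + 1` one at a time. -/
def p1PlusList : ℕ → List (List (Finset ℕ))
  | 0 => [[{1}]]
  | k + 1 => (p1PlusList k).flatMap (extendBlocks (k + 2))

lemma mem_foldr_union (L : List (Finset ℕ)) (a : ℕ) :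
    a ∈ L.foldr (· ∪ ·) ∅ ↔ ∃ A ∈ L, a ∈ A := by
  induction L with
  | nil => simp
  | cons A L ih => simp [ih]

lemma deleteElt_of_notMem {m : ℕ} {L : List (Finset ℕ)}
    (hne : ∀ A ∈ L, A.Nonempty) (hm : ∀ A ∈ L, m ∉ A) : deleteElt m L = L := by
  induction L with
  | nil => rfl
  | cons A L ih =>
    simp only [List.mem_cons, forall_eq_or_imp] at hne hm
    have := ih hne.2 hm.2
    simp only [deleteElt] at this
    simp [deleteElt, Finset.erase_eq_of_notMem hm.1, hne.1.ne_empty]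
    simpa using this

lemma deleteElt_cons {m : ℕ} {A : Finset ℕ} {L : List (Finset ℕ)} (h : A.erase m ≠ ∅) :
    deleteElt m (A :: L) = A.erase m :: deleteElt m L := by
  simp only [deleteElt, List.map_cons]
  rw [List.filter_cons_of_pos (by simpa using h)]

lemma deleteElt_cons_singleton (m : ℕ) (L : List (Finset ℕ)) :
    deleteElt m ({m} :: L) = deleteElt m L := by
  simp [deleteElt]

lemma deleteElt_of_mem_extendBlocks {m : ℕ} {L L' : List (Finset ℕ)}
    (hne : ∀ A ∈ L, A.Nonempty) (hm : ∀ A ∈ L, m ∉ A) (h : L' ∈ extendBlocks m L) :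
    deleteElt m L' = L := by
  induction L generalizing L' with
  | nil => simp [extendBlocks] at h
  | cons A L ih =>
    have hd := deleteElt_of_notMem (List.forall_mem_of_forall_mem_cons hne)
      (List.forall_mem_of_forall_mem_cons hm)
    simp only [List.mem_cons, forall_eq_or_imp] at hne hm
    have hA : A.erase m = A := Finset.erase_eq_of_notMem hm.1
    simp only [extendBlocks, List.mem_cons, List.mem_map] at h
    rcases h with rfl | rfl | ⟨T, hT, rfl⟩
    · rw [deleteElt_cons] <;> rw [Finset.erase_insert hm.1]
      · rw [hd]
      · exact hne.1.ne_empty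
    · rw [deleteElt_cons, deleteElt_cons_singleton, hd, hA]
      rw [hA]; exact hne.1.ne_empty
    · rw [deleteElt_cons, ih hne.2 hm.2 hT, hA]
      rw [hA]; exact hne.1.ne_empty

/-- Every tuple of disjoint nonempty blocks covering `m` arises by extension from the tuple with
`m` deleted, except when `{m}` is the leading block. -/
lemma eq_cons_or_mem_extendBlocks {m : ℕ} {L : List (Finset ℕ)}
    (hne : ∀ A ∈ L, A.Nonempty) (hd : L.Pairwise Disjoint) (hm : ∃ A ∈ L, m ∈ A) :
    L = {m} :: deleteElt m L ∨ L ∈ extendBlocks m (deleteElt m L) := by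
  induction L with
  | nil => simp at hm
  | cons A T ih =>
    rw [List.pairwise_cons] at hd
    simp only [List.mem_cons, forall_eq_or_imp] at hne
    by_cases hA : m ∈ A
    · have hT : deleteElt m T = T := deleteElt_of_notMem hne.2 fun B hB hmB =>
        Finset.disjoint_left.1 (hd.1 B hB) hA hmB
      by_cases hs : A.erase m = ∅
      · left
        have : A = {m} := by
          rw [← Finset.insert_erase hA, hs]
          rfl
        rw [this, deleteElt_cons_singleton, hT]
      · right
        rw [deleteElt_cons hs, hT]
        simp [extendBlocks, Finset.insert_erase hA]
    · have hAe : A.erase m = A := Finset.erase_eq_of_notMem hA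
      have hm' : ∃ B ∈ T, m ∈ B := by
        obtain ⟨B, hB, hmB⟩ := hm
        rcases List.mem_cons.1 hB with rfl | hB
        · exact absurd hmB hA
        · exact ⟨B, hB, hmB⟩
      right
      rw [deleteElt_cons (by rw [hAe]; exact hne.1.ne_empty), hAe]
      rcases ih hne.2 hd.2 hm' with h | h
      · simp only [extendBlocks, List.mem_cons]
        right; left
        rw [← h]
      · simp only [extendBlocks, List.mem_cons, List.mem_map]
        exact Or.inr (Or.inr ⟨T, h, rfl⟩)

lemma mem_deleteElt {m : ℕ} {L : List (Finset ℕ)} {B : Finset ℕ} :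
    B ∈ deleteElt m L ↔ (∃ A ∈ L, A.erase m = B) ∧ B ≠ ∅ := by
  simp [deleteElt]

lemma nodup_extendBlocks {m : ℕ} {L : List (Finset ℕ)} (hm : ∀ A ∈ L, m ∉ A) :
    (extendBlocks m L).Nodup := by
  induction L with
  | nil => simp [extendBlocks]
  | cons A L ih =>
    simp only [List.mem_cons, forall_eq_or_imp] at hm
    have h1 : insert m A ≠ A := fun h => hm.1 (Finset.insert_eq_self.1 h)
    have h2 : {m} :: L ∉ extendBlocks m L := by
      cases L with
      | nil => simp [extendBlocks]
      | cons B L =>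
        have hB : m ∉ B := hm.2 B (by simp)
        have hB' : B ≠ {m} := fun h => hB (by simp [h])
        have hL : L ≠ B :: L := fun h => by simpa using congrArg List.length h
        simp [extendBlocks, hB', hL.symm, hB'.symm]
    have h3 := (ih hm.2).map (f := (A :: ·)) (List.cons_injective)
    simp only [extendBlocks, List.nodup_cons]
    refine ⟨?_, ?_, h3⟩
    · simp [h1, h1.symm]
    · simpa using h2

lemma isPartitionOf_of_mem_extendBlocks {m : ℕ} {L L' : List (Finset ℕ)}
    (hne : ∀ A ∈ L, A.Nonempty) (hd : L.Pairwise Disjoint) (hm : ∀ A ∈ L, m ∉ A)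
    (h : L' ∈ extendBlocks m L) :
    (∀ A ∈ L', A.Nonempty) ∧ L'.Pairwise Disjoint ∧
      L'.foldr (· ∪ ·) ∅ = insert m (L.foldr (· ∪ ·) ∅) ∧ L.headI ⊆ L'.headI := by
  induction L generalizing L' with
  | nil => simp [extendBlocks] at h
  | cons A L ih =>
    rw [List.pairwise_cons] at hd
    simp only [List.mem_cons, forall_eq_or_imp] at hne hm
    simp only [extendBlocks, List.mem_cons, List.mem_map] at h
    rcases h with rfl | rfl | ⟨T, hT, rfl⟩
    · refine ⟨?_, ?_, ?_, ?_⟩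
      · simpa using hne.2
      · rw [List.pairwise_cons]
        exact ⟨fun B hB => by
          rw [Finset.disjoint_insert_left]; exact ⟨hm.2 B hB, hd.1 B hB⟩, hd.2⟩
      · simp [Finset.insert_union]
      · simp
    · refine ⟨?_, ?_, ?_, ?_⟩
      · simpa using hne
      · simp only [List.pairwise_cons, List.mem_cons, forall_eq_or_imp]
        exact ⟨⟨by simpa using hm.1, hd.1⟩, by simpa using hm.2, hd.2⟩
      · ext a; simp
      · simp
    · obtain ⟨i1, i2, i3, -⟩ := ih hne.2 hd.2 hm.2 hT
      refine ⟨?_, ?_, ?_, ?_⟩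
      · simpa using ⟨hne.1, i1⟩
      · rw [List.pairwise_cons]
        refine ⟨fun B hB => ?_, i2⟩
        rw [Finset.disjoint_left]
        intro a ha haB
        have : a ∈ T.foldr (· ∪ ·) ∅ := (mem_foldr_union _ _).2 ⟨B, hB, haB⟩
        rw [i3, Finset.mem_insert, mem_foldr_union] at this
        rcases this with rfl | ⟨C, hC, haC⟩
        · exact hm.1 ha
        · exact Finset.disjoint_left.1 (hd.1 C hC) ha haC
      · simp [i3]
      · simp

lemma IsPartitionOf.subset {j : ℕ} {L : List (Finset ℕ)} (h : IsPartitionOf j L)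
    {A : Finset ℕ} (hA : A ∈ L) : A ⊆ Finset.Icc 1 j := fun a ha => by
  rw [← h.2.2]
  exact (mem_foldr_union _ _).2 ⟨A, hA, ha⟩

lemma isP1Plus_one {L : List (Finset ℕ)} : IsP1Plus 1 L ↔ L = [{1}] := by
  constructor
  · rintro ⟨h, h1⟩
    match L, h, h1 with
    | [], _, h1 => exact absurd h1 (Finset.notMem_empty 1)
    | A :: T, h, h1 =>
      have key : ∀ B ∈ A :: T, B = {1} := fun B hB => by
        have h2 := h.subset hB
        rw [Finset.Icc_self] at h2
        exact (Finset.subset_singleton_iff.1 h2).resolve_left (h.1 B hB).ne_empty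
      match T, h, key with
      | [], h, key => simpa using key A (by simp)
      | B :: T, h, key =>
        have hA := key A (by simp)
        have hB := key B (by simp)
        have := (List.pairwise_cons.1 h.2.1).1 B (by simp)
        simp [hA, hB] at this
  · rintro rfl
    refine ⟨⟨?_, ?_, ?_⟩, ?_⟩ <;> simp

lemma isP1Plus_succ {k : ℕ} {L' : List (Finset ℕ)} :
    IsP1Plus (k + 2) L' ↔ ∃ L, IsP1Plus (k + 1) L ∧ L' ∈ extendBlocks (k + 2) L := by
  constructor
  · rintro ⟨⟨hne, hd, hu⟩, h1⟩
    have hm : ∃ A ∈ L', k + 2 ∈ A := by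
      rw [← mem_foldr_union, hu]; simp
    refine ⟨deleteElt (k + 2) L', ⟨⟨?_, ?_, ?_⟩, ?_⟩, ?_⟩
    · intro B hB
      exact Finset.nonempty_iff_ne_empty.2 (mem_deleteElt.1 hB).2
    · refine List.Pairwise.filter _ (List.pairwise_map.2 (hd.imp fun {A B} h => ?_))
      exact h.mono (Finset.erase_subset _ _) (Finset.erase_subset _ _)
    · ext a
      have hu' : (∃ A ∈ L', a ∈ A) ↔ a ∈ Finset.Icc 1 (k + 2) := by
        rw [← mem_foldr_union, hu]
      have : a ∈ Finset.Icc 1 (k + 1) ↔ a ≠ k + 2 ∧ a ∈ Finset.Icc 1 (k + 2) := by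
        simp only [Finset.mem_Icc]; omega
      rw [mem_foldr_union, this, ← hu']
      constructor
      · rintro ⟨B, hB, haB⟩
        obtain ⟨⟨A, hA, rfl⟩, -⟩ := mem_deleteElt.1 hB
        exact ⟨(Finset.mem_erase.1 haB).1, A, hA, (Finset.mem_erase.1 haB).2⟩
      · rintro ⟨hne, A, hA, haA⟩
        have hmem := Finset.mem_erase.2 ⟨hne, haA⟩
        exact ⟨A.erase (k + 2), mem_deleteElt.2 ⟨⟨A, hA, rfl⟩, Finset.ne_empty_of_mem hmem⟩, hmem⟩
    · match L', h1 with
      | [], h1 => exact absurd h1 (Finset.notMem_empty 1)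
      | A :: T, h1 =>
        have hmem : 1 ∈ A.erase (k + 2) := Finset.mem_erase.2 ⟨by omega, by simpa using h1⟩
        rw [deleteElt_cons (Finset.ne_empty_of_mem hmem)]
        exact hmem
    · rcases eq_cons_or_mem_extendBlocks hne hd hm with h | h
      · rw [h] at h1
        simp at h1
      · exact h
  · rintro ⟨L, ⟨hL, h1⟩, h⟩
    have hm : ∀ A ∈ L, k + 2 ∉ A := fun A hA hk => by
      have := hL.subset hA hk
      simp at this
    obtain ⟨i1, i2, i3, i4⟩ := isPartitionOf_of_mem_extendBlocks hL.1 hL.2.1 hm h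
    refine ⟨⟨i1, i2, ?_⟩, i4 h1⟩
    rw [i3, hL.2.2]
    ext a
    simp only [Finset.mem_insert, Finset.mem_Icc]
    omega

lemma mem_p1PlusList {k : ℕ} {L : List (Finset ℕ)} :
    L ∈ p1PlusList k ↔ IsP1Plus (k + 1) L := by
  induction k generalizing L with
  | zero => simp [p1PlusList, isP1Plus_one]
  | succ k ih => simp [p1PlusList, isP1Plus_succ, ih]

lemma IsP1Plus.lt {k : ℕ} {L : List (Finset ℕ)} (h : IsP1Plus (k + 1) L) :
    ∀ A ∈ L, ∀ a ∈ A, a < k + 2 := fun A hA a ha => by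
  have := h.1.subset hA ha
  simp at this
  omega

lemma nodup_p1PlusList (k : ℕ) : (p1PlusList k).Nodup := by
  induction k with
  | zero => simp [p1PlusList]
  | succ k ih =>
    have hm : ∀ L ∈ p1PlusList k, ∀ A ∈ L, k + 2 ∉ A := fun L hL A hA hk =>
      lt_irrefl _ ((mem_p1PlusList.1 hL).lt A hA _ hk)
    rw [p1PlusList, List.nodup_flatMap]
    refine ⟨fun L hL => nodup_extendBlocks (hm L hL), ?_⟩
    -- Extensions of distinct tuples are distinct since deletion recovers the original tuple.
    refine List.Pairwise.imp_of_mem ?_ ih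
    intro L₁ L₂ h₁ h₂ hne
    rw [Function.onFun, List.disjoint_left]
    intro L' hL₁ hL₂
    exact hne ((deleteElt_of_mem_extendBlocks (mem_p1PlusList.1 h₁).1.1 (hm _ h₁) hL₁).symm.trans
      (deleteElt_of_mem_extendBlocks (mem_p1PlusList.1 h₂).1.1 (hm _ h₂) hL₂))

/-! ### Differentiating the products over blocks -/

lemma tupleOf_insert {n : ℕ} (μ : ℕ → Fin n) {A : Finset ℕ} {m : ℕ} (h : ∀ a ∈ A, a < m) :
    tupleOf μ (insert m A) = tupleOf μ A ++ [μ m] := by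
  have hm : m ∉ A := fun hm => lt_irrefl _ (h m hm)
  have : (insert m A).sort (· ≤ ·) = A.sort (· ≤ ·) ++ [m] := by
    refine List.Perm.eq_of_pairwise' (r := (· ≤ ·)) (Finset.pairwise_sort _ _) ?_ ?_
    · rw [List.pairwise_append]
      refine ⟨Finset.pairwise_sort _ _, by simp, fun a ha b hb => ?_⟩
      rw [List.mem_singleton] at hb
      rw [hb]
      exact (h a ((Finset.mem_sort _).1 ha)).le
    · rw [List.perm_ext_iff_of_nodup (Finset.sort_nodup _ _)]
      · intro a
        simp [or_comm]
      · rw [List.nodup_append]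
        refine ⟨Finset.sort_nodup _ _, by simp, fun a ha b hb => ?_⟩
        rw [List.mem_singleton] at hb
        rw [hb]
        exact (h a ((Finset.mem_sort _).1 ha)).ne
  simp [tupleOf, this]

/-- The signed product `(-1)^l ξ_{λ_1} ⋯ ξ_{λ_l}`, as the product of the maps `-ξ_{λ_i}`. -/
noncomputable def signedProd {n N : ℕ} (g : (Fin n → ℝ) → Matrix (Fin N) (Fin N) ℝ)
    (μ : ℕ → Fin n) (L : List (Finset ℕ)) : (Fin n → ℝ) → Matrix (Fin N) (Fin N) ℝ :=
  (L.map fun A => -xiTup g (tupleOf μ A)).prod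

lemma signedProd_cons {n N : ℕ} (g : (Fin n → ℝ) → Matrix (Fin N) (Fin N) ℝ)
    (μ : ℕ → Fin n) (A : Finset ℕ) (L : List (Finset ℕ)) :
    signedProd g μ (A :: L) = -xiTup g (tupleOf μ A) * signedProd g μ L := by
  simp [signedProd]

lemma signedProd_apply {n N : ℕ} (g : (Fin n → ℝ) → Matrix (Fin N) (Fin N) ℝ)
    (μ : ℕ → Fin n) (L : List (Finset ℕ)) (x : Fin n → ℝ) :
    signedProd g μ L x = (-1 : ℝ) ^ L.length • xiPart g μ L x := by
  induction L with
  | nil => simp [signedProd, xiPart]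
  | cons A L ih =>
    rw [signedProd_cons, Pi.mul_apply, ih]
    simp [xiPart, pow_succ]

lemma MSmooth.signedProd {n N : ℕ} {g : (Fin n → ℝ) → Matrix (Fin N) (Fin N) ℝ}
    (hg : MSmooth g) (hinv : ∀ x, IsUnit (g x)) (μ : ℕ → Fin n) (L : List (Finset ℕ)) :
    MSmooth (signedProd g μ L) := by
  induction L with
  | nil => exact MSmooth.const 1
  | cons A L ih =>
    rw [signedProd_cons]
    exact (hg.xiTup hinv _).neg.mul ih

/-- The derivative of a signed product is the sum of the signed products over all extensions. -/
lemma pd_signedProd {n N : ℕ} {g : (Fin n → ℝ) → Matrix (Fin N) (Fin N) ℝ}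
    (hg : MSmooth g) (hinv : ∀ x, IsUnit (g x)) (μ : ℕ → Fin n) (m : ℕ) (L : List (Finset ℕ))
    (h : ∀ A ∈ L, ∀ a ∈ A, a < m) :
    pd (μ m) (signedProd g μ L) = ((extendBlocks m L).map (signedProd g μ)).sum := by
  induction L with
  | nil => exact pd_const 1 _
  | cons A L ih =>
    simp only [List.mem_cons, forall_eq_or_imp] at h
    have hcomp : (signedProd g μ ∘ fun T => A :: T)
        = fun T => -xiTup g (tupleOf μ A) * signedProd g μ T :=
      funext fun T => signedProd_cons g μ A T
    have hs : tupleOf μ {m} = [μ m] := by simp [tupleOf]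
    rw [signedProd_cons, pd_mul (hg.xiTup hinv _).neg (hg.signedProd hinv μ L), ih h.2, pd_neg,
      pd_xiTup hg hinv]
    simp only [extendBlocks, List.map_cons, List.sum_cons, List.map_map, hcomp,
      List.sum_map_mul_left, signedProd_cons, tupleOf_insert μ h.1, hs]
    noncomm_ring

lemma MSmooth.list_sum {n N : ℕ} (l : List ((Fin n → ℝ) → Matrix (Fin N) (Fin N) ℝ))
    (h : ∀ f ∈ l, MSmooth f) : MSmooth l.sum := by
  induction l with
  | nil => exact MSmooth.const 0
  | cons f l ih =>
    simp only [List.mem_cons, forall_eq_or_imp] at h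
    simpa using h.1.add (ih h.2)

lemma pd_list_sum {n N : ℕ} (l : List ((Fin n → ℝ) → Matrix (Fin N) (Fin N) ℝ))
    (h : ∀ f ∈ l, MSmooth f) (ν : Fin n) : pd ν l.sum = (l.map (pd ν)).sum := by
  induction l with
  | nil => exact pd_const 0 _
  | cons f l ih =>
    simp only [List.mem_cons, forall_eq_or_imp] at h
    rw [List.sum_cons, pd_add h.1 (MSmooth.list_sum l h.2), ih h.2]
    simp

lemma tupleOf_Icc_succ {n : ℕ} (μ : ℕ → Fin n) (k : ℕ) :
    tupleOf μ (Finset.Icc 1 (k + 1)) = tupleOf μ (Finset.Icc 1 k) ++ [μ (k + 1)] := by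
  rw [← tupleOf_insert μ fun a ha => by simp at ha; omega]
  congr 1
  ext a
  simp only [Finset.mem_insert, Finset.mem_Icc]
  omega

lemma xiJ_cons {n N : ℕ} (g : (Fin n → ℝ) → Matrix (Fin N) (Fin N) ℝ) (μ : Fin n)
    {w : List (Fin n)} (hw : w ≠ []) : xiJ g (μ :: w) = pd μ (xiJ g w) := by
  match w, hw with
  | _ :: _, _ => rfl

lemma xiJ_eq_neg_sum {n N : ℕ} {g : (Fin n → ℝ) → Matrix (Fin N) (Fin N) ℝ}
    (hg : MSmooth g) (hinv : ∀ x, IsUnit (g x)) (μ : ℕ → Fin n) (k : ℕ) :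
    xiJ g (tupleOf μ (Finset.Icc 1 (k + 1))).reverse
      = -((p1PlusList k).map (signedProd g μ)).sum := by
  induction k with
  | zero =>
    have : tupleOf μ {1} = [μ 1] := by simp [tupleOf]
    simp [p1PlusList, signedProd, this]
    rfl
  | succ k ih =>
    rw [tupleOf_Icc_succ, List.reverse_append, List.reverse_singleton, List.singleton_append,
      xiJ_cons, ih, pd_neg, pd_list_sum, List.map_map]
    · rw [p1PlusList, List.map_flatMap, List.flatMap, List.sum_flatten, List.map_map]
      congr 2
      refine List.map_congr_left fun L hL => ?_
      exact pd_signedProd hg hinv μ (k + 2) L (mem_p1PlusList.1 hL).lt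
    · simp only [List.mem_map]
      rintro _ ⟨L, -, rfl⟩
      exact hg.signedProd hinv μ L
    · rw [tupleOf_Icc_succ]
      simp

/-- for smooth `g : ℝⁿ → M_N(ℝ)` with `g(x)` invertible everywhere, `j ≥ 1`
and a tuple `(μ_1,…,μ_j)` (given by `μ : ℕ → Fin n` on indices `1,…,j`), pointwise
`ξ^{(j)}_{μ_1…μ_j} = Σ_{λ ∈ P₁⁺(j)} (−1)^{length(λ)−1} ξ_{λ(μ_1…μ_j)}`.
Here `ξ^{(j)}_{μ_1…μ_j} = ∂_{μ_j}(ξ^{(j−1)}_{μ_1…μ_{j−1}})` (new index appended), so it is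
`xiJ g` applied to the reversed tuple, `xiJ` having the head-outermost convention. -/
theorem xiJ_eq_sum_partitions (n N : ℕ) (hn : 1 ≤ n) (hN : 1 ≤ N)
    (g : (Fin n → ℝ) → Matrix (Fin N) (Fin N) ℝ)
    (hg : MSmooth g) (hinv : ∀ x, IsUnit (g x))
    (j : ℕ) (hj : 1 ≤ j) (μ : ℕ → Fin n) (x : Fin n → ℝ) :
    xiJ g (tupleOf μ (Finset.Icc 1 j)).reverse x
      = ∑ᶠ L ∈ {L : List (Finset ℕ) | IsP1Plus j L},
          ((-1 : ℝ) ^ (L.length - 1)) • xiPart g μ L x := by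
  obtain ⟨k, rfl⟩ : ∃ k, j = k + 1 := ⟨j - 1, by omega⟩
  have hset : {L : List (Finset ℕ) | IsP1Plus (k + 1) L} = ↑(p1PlusList k).toFinset := by
    ext L
    simp [mem_p1PlusList]
  rw [xiJ_eq_neg_sum hg hinv, hset, finsum_mem_coe_finset,
    List.sum_toFinset _ (nodup_p1PlusList k), Pi.neg_apply]
  have happ : -((p1PlusList k).map (signedProd g μ)).sum x
      = ((p1PlusList k).map fun L => -signedProd g μ L x).sum := by
    simpa [Function.comp_def] using map_list_sum
      (-Pi.evalAddMonoidHom (fun _ : Fin n → ℝ => Matrix (Fin N) (Fin N) ℝ) x)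
      ((p1PlusList k).map (signedProd g μ))
  rw [happ]
  congr 1
  refine List.map_congr_left fun L hL => ?_
  have hL0 : L ≠ [] := by
    rintro rfl
    exact Finset.notMem_empty 1 (mem_p1PlusList.1 hL).2
  obtain ⟨l, hl⟩ : ∃ l, L.length = l + 1 :=
    Nat.exists_eq_succ_of_ne_zero (by simpa using hL0)
  simp [signedProd_apply, hl, pow_succ]
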